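/- arXiv:2604.12244 — 2 statements merged into one kernel-verified Lean document; each statement's English description precedes it below -/
import Mathlib

section
/- Let m_ρ: 𝔻₁ → 𝔻₁ be the map z ↦ ρz for 0 < ρ < 1. Then for all ξ, η in 𝔻₁, d_hyp(m_ρ(ξ), m_ρ(η)) ≤ ρ · d_hyp(ξ, η). -/
open Complex

/-- Inverse hyperbolic tangent. -/
noncomputable def artanh (x : ℝ) : ℝ := (1 / 2) * Real.log ((1 + x) / (1 - x))

/-- The Poincaré hyperbolic distance on the open unit disk. -/
noncomputable def dHyp (z w : ℂ) : ℝ :=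
  2 * artanh ‖(z - w) / (1 - (starRingEnd ℂ) w * z)‖

lemma Complex.sq_norm_one_sub_conj_mul (z w : ℂ) :
    ‖1 - (starRingEnd ℂ) w * z‖ ^ 2
      = (1 - ‖z‖ ^ 2) * (1 - ‖w‖ ^ 2) + ‖z - w‖ ^ 2 := by
  simp only [Complex.sq_norm, Complex.normSq_apply, Complex.sub_re, Complex.sub_im,
    Complex.mul_re, Complex.mul_im, Complex.conj_re, Complex.conj_im, Complex.one_re,
    Complex.one_im]
  ring

lemma dHyp_eq_arsinh {z w : ℂ} (hz : ‖z‖ < 1) (hw : ‖w‖ < 1) :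
    dHyp z w
      = 2 * Real.arsinh (‖z - w‖ / √((1 - ‖z‖ ^ 2) * (1 - ‖w‖ ^ 2))) := by
  have hz' : 0 < 1 - ‖z‖ ^ 2 := by nlinarith [norm_nonneg z]
  have hw' : 0 < 1 - ‖w‖ ^ 2 := by nlinarith [norm_nonneg w]
  have hu := mul_pos hz' hw'
  have hn := Complex.sq_norm_one_sub_conj_mul z w
  set n := ‖1 - (starRingEnd ℂ) w * z‖
  set u := (1 - ‖z‖ ^ 2) * (1 - ‖w‖ ^ 2)
  have hn0 : 0 ≤ n := norm_nonneg _
  have hc0 : 0 ≤ ‖z - w‖ := norm_nonneg _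
  have hnpos : 0 < n := hn0.lt_of_ne (by rintro h; rw [← h] at hn; nlinarith)
  have hp0 : 0 ≤ ‖z - w‖ / n := by positivity
  have hp1 : ‖z - w‖ / n < 1 := by
    rw [div_lt_one hnpos]
    exact lt_of_pow_lt_pow_left₀ 2 hn0 (by linarith)
  have hs : 1 - (‖z - w‖ / n) ^ 2 = u / n ^ 2 := by
    field_simp
    linarith
  have key : Real.artanh (‖z - w‖ / n) = Real.arsinh (‖z - w‖ / √u) := by
    rw [← Real.arsinh_sinh (Real.artanh _), Real.sinh_artanh ⟨by linarith, hp1⟩, hs,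
      Real.sqrt_div hu.le, Real.sqrt_sq hn0, div_div_div_cancel_right₀ hnpos.ne']
  rw [dHyp, artanh, norm_div, ← key, Real.artanh_eq_half_log ⟨by linarith, hp1.le⟩]

lemma hasDerivAt_mul_div_sqrt {a b c r : ℝ}
    (hu : 0 < (1 - r ^ 2 * a ^ 2) * (1 - r ^ 2 * b ^ 2)) :
    HasDerivAt (fun t : ℝ => t * c / √((1 - t ^ 2 * a ^ 2) * (1 - t ^ 2 * b ^ 2)))
      (c / √((1 - r ^ 2 * a ^ 2) * (1 - r ^ 2 * b ^ 2)) * ((1 - r ^ 4 * a ^ 2 * b ^ 2)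
        / ((1 - r ^ 2 * a ^ 2) * (1 - r ^ 2 * b ^ 2)))) r := by
  have hlin (k : ℝ) : HasDerivAt (fun t : ℝ => 1 - t ^ 2 * k ^ 2) (-(2 * r * k ^ 2)) r := by
    simpa using (((hasDerivAt_id r).pow 2).mul_const (k ^ 2)).const_sub 1
  have h := ((hasDerivAt_id r).mul_const c).div (((hlin a).mul (hlin b)).sqrt hu.ne')
    (Real.sqrt_pos.2 hu).ne'
  refine h.congr_deriv ?_
  have hs := Real.sq_sqrt hu.le
  have hs0 := Real.sqrt_pos.2 hu
  simp only [Pi.mul_apply, id] at *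
  set s := √((1 - r ^ 2 * a ^ 2) * (1 - r ^ 2 * b ^ 2))
  rw [← hs]
  field_simp
  rw [hs]
  ring

lemma sqrt_one_add_sq_le {a b c r : ℝ} (ha : 0 ≤ a) (hb : 0 ≤ b) (hc : 0 ≤ c)
    (hcab : c ≤ a + b) (hra : r * a < 1) (hrb : r * b < 1) (hr : 0 ≤ r) :
    √(1 + (r * c / √((1 - r ^ 2 * a ^ 2) * (1 - r ^ 2 * b ^ 2))) ^ 2)
      ≤ (1 - r ^ 4 * a ^ 2 * b ^ 2) / ((1 - r ^ 2 * a ^ 2) * (1 - r ^ 2 * b ^ 2)) := by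
  have hA0 : 0 ≤ r * a := by positivity
  have hB0 : 0 ≤ r * b := by positivity
  have hC0 : 0 ≤ r * c := by positivity
  have hCAB : r * c ≤ r * a + r * b := by nlinarith
  have e : r ^ 4 * a ^ 2 * b ^ 2 = (r * a) ^ 2 * (r * b) ^ 2 := by ring
  rw [e, ← mul_pow, ← mul_pow]
  generalize r * a = A at *
  generalize r * b = B at *
  generalize r * c = C at *
  have hx : 0 < 1 - A ^ 2 := by nlinarith
  have hy : 0 < 1 - B ^ 2 := by nlinarith
  have hu := mul_pos hx hy
  have hAB : A * B < 1 := by nlinarith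
  have hnum : 0 ≤ 1 - A ^ 2 * B ^ 2 := by nlinarith [mul_nonneg hA0 hB0]
  refine Real.sqrt_le_iff.2 ⟨div_nonneg hnum hu.le, ?_⟩
  rw [div_pow, Real.sq_sqrt hu.le, div_pow, one_add_div hu.ne',
    div_le_div_iff₀ hu (by positivity)]
  have h₁ : (1 - A ^ 2) * (1 - B ^ 2) + C ^ 2 ≤ (1 + A * B) ^ 2 := by
    nlinarith [mul_self_le_mul_self hC0 hCAB]
  have h₂ : (1 - A ^ 2) * (1 - B ^ 2) ≤ (1 - A * B) ^ 2 := by nlinarith [sq_nonneg (A - B)]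
  calc ((1 - A ^ 2) * (1 - B ^ 2) + C ^ 2) * ((1 - A ^ 2) * (1 - B ^ 2)) ^ 2
      = (((1 - A ^ 2) * (1 - B ^ 2) + C ^ 2) * ((1 - A ^ 2) * (1 - B ^ 2)))
        * ((1 - A ^ 2) * (1 - B ^ 2)) := by ring
    _ ≤ ((1 + A * B) ^ 2 * (1 - A * B) ^ 2) * ((1 - A ^ 2) * (1 - B ^ 2)) := by gcongr
    _ = (1 - A ^ 2 * B ^ 2) ^ 2 * ((1 - A ^ 2) * (1 - B ^ 2)) := by ring

lemma Real.arsinh_le_self {x : ℝ} (hx : 0 ≤ x) : Real.arsinh x ≤ x := by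
  rw [← Real.sinh_le_sinh, Real.sinh_arsinh]
  exact Real.self_le_sinh_iff.2 hx

lemma monotoneOn_arsinh_div {a b c : ℝ} (ha : 0 ≤ a) (hb : 0 ≤ b) (hc : 0 ≤ c)
    (hcab : c ≤ a + b) (ha1 : a < 1) (hb1 : b < 1) :
    MonotoneOn (fun r : ℝ =>
      Real.arsinh (r * c / √((1 - r ^ 2 * a ^ 2) * (1 - r ^ 2 * b ^ 2))) / r)
      (Set.Ioc 0 1) := by
  have hlt {k r : ℝ} (hr : r ∈ Set.Ioc (0 : ℝ) 1) (hk : 0 ≤ k) (hk1 : k < 1) : r * k < 1 := by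
    nlinarith [hr.1, hr.2]
  have hpos {k r : ℝ} (hr : r ∈ Set.Ioc (0 : ℝ) 1) (hk : 0 ≤ k) (hk1 : k < 1) :
      0 < 1 - r ^ 2 * k ^ 2 := by
    have := hlt hr hk hk1
    nlinarith [mul_nonneg hr.1.le hk]
  have hderiv {r : ℝ} (hr : r ∈ Set.Ioc (0 : ℝ) 1) :=
    ((hasDerivAt_mul_div_sqrt (c := c) (mul_pos (hpos hr ha ha1) (hpos hr hb hb1))).arsinh).div
      (hasDerivAt_id r) hr.1.ne'
  refine monotoneOn_of_deriv_nonneg (convex_Ioc 0 1)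
    (fun r hr => (hderiv hr).continuousAt.continuousWithinAt)
    (fun r hr => (hderiv (interior_subset hr)).differentiableAt.differentiableWithinAt)
    (fun r hr => ?_)
  replace hr := interior_subset hr
  refine (hderiv hr).deriv.symm ▸ div_nonneg (sub_nonneg.2 ?_) (sq_nonneg _)
  have hK := sqrt_one_add_sq_le ha hb hc hcab (hlt hr ha ha1) (hlt hr hb hb1) hr.1.le
  have hr0 := hr.1
  have hle := Real.arsinh_le_self (x := r * c / √((1 - r ^ 2 * a ^ 2) * (1 - r ^ 2 * b ^ 2)))
    (by positivity)
  have hq : 0 < √(1 + (r * c / √((1 - r ^ 2 * a ^ 2) * (1 - r ^ 2 * b ^ 2))) ^ 2) :=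
    Real.sqrt_pos.2 (by positivity)
  simp only [id, mul_one, smul_eq_mul]
  refine hle.trans ?_
  simp only [mul_comm r, mul_div_right_comm c r] at hK hq ⊢
  refine mul_le_mul_of_nonneg_right ?_ hr0.le
  rw [inv_mul_eq_div, le_div_iff₀ hq]
  exact mul_le_mul_of_nonneg_left hK (by positivity)

/-- The map `m_ρ : z ↦ ρ z` on the unit disk contracts the hyperbolic
distance by the factor `ρ`, for `0 < ρ < 1`. -/
theorem scaling_hyperbolic_contraction
    (ρ : ℝ) (hρ0 : 0 < ρ) (hρ1 : ρ < 1) :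
    ∀ ξ η : ℂ, ‖ξ‖ < 1 → ‖η‖ < 1 →
      dHyp ((ρ : ℂ) * ξ) ((ρ : ℂ) * η) ≤ ρ * dHyp ξ η := by
  intro ξ η hξ hη
  have hnorm (z : ℂ) : ‖(ρ : ℂ) * z‖ = ρ * ‖z‖ := by
    rw [norm_mul, Complex.norm_real, Real.norm_of_nonneg hρ0.le]
  have hlt {z : ℂ} (hz : ‖z‖ < 1) : ‖(ρ : ℂ) * z‖ < 1 := by
    rw [hnorm]
    nlinarith [norm_nonneg z]
  rw [dHyp_eq_arsinh (hlt hξ) (hlt hη), dHyp_eq_arsinh hξ hη, ← mul_sub, hnorm, hnorm, hnorm,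
    mul_pow, mul_pow]
  have h := monotoneOn_arsinh_div (norm_nonneg ξ) (norm_nonneg η) (norm_nonneg (ξ - η))
    (norm_sub_le ξ η) hξ hη ⟨hρ0, hρ1.le⟩ ⟨one_pos, le_rfl⟩ hρ1.le
  simp only [one_pow, one_mul, div_one] at h
  rw [div_le_iff₀ hρ0] at h
  linarith
end

section
/- Let Q be an irreducible row-stochastic matrix indexed by a finite set C, with unique stationary probability vector (π_r)_{r∈C} (so π_r > 0, ∑ π_r = 1, and ∑_r π_r Q_{r,r'} = π_{r'}). Let 0 < ρ < 1 and let (f_r)_{r∈C} be maps on (-1,1) each of which is a ρ-Lipschitz contraction for the hyperbolic metric d_hyp. Define the Markov operator ℋ on the product space 𝒫₁^C of |C|-tuples of probability measures on (-1,1) with finite first hyperbolic moment by (ℋη)_{r'} = ∑_{r∈C} (π_r Q_{r,r'}/π_{r'}) (f_r)_* η_r. Then ℋ maps 𝒫₁^C into itself and is a ρ-contraction with respect to the metric 𝒲(η, ζ) = ∑_{r∈C} π_r W₁(η_r, ζ_r), where W₁ is the Wasserstein-1 metric for d_hyp. In particular, ℋ has a unique fixed point in 𝒫₁^C. -/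
open MeasureTheory

/-- The hyperbolic distance on `(-1,1)`: `d_hyp(x,y) = 2|artanh x - artanh y|`. -/
noncomputable def dHypR (x y : ℝ) : ℝ := 2 * |artanh x - artanh y|

/-- `η` is a coupling of `ν₁` and `ν₂`. -/
def IsCoupling (η : Measure (ℝ × ℝ)) (ν₁ ν₂ : Measure ℝ) : Prop :=
  η.map Prod.fst = ν₁ ∧ η.map Prod.snd = ν₂

/-- Wasserstein-1 distance with cost `d_hyp`. -/
noncomputable def W1 (ν₁ ν₂ : Measure ℝ) : ENNReal :=
  ⨅ η ∈ {η : Measure (ℝ × ℝ) | IsProbabilityMeasure η ∧ IsCoupling η ν₁ ν₂},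
    ∫⁻ p, ENNReal.ofReal (dHypR p.1 p.2) ∂η

/-- Membership in `𝒫₁(-1,1)`: a Borel probability measure concentrated on `(-1,1)`
with finite first hyperbolic moment. -/
def MemP1 (ν : Measure ℝ) : Prop :=
  IsProbabilityMeasure ν ∧ ν (Set.Ioo (-1 : ℝ) 1)ᶜ = 0 ∧
    ∫⁻ x, ENNReal.ofReal (dHypR x 0) ∂ν < ⊤

/-- The Markov operator `ℋ`: `(ℋη)_{r'} = ∑_r (π_r Q_{r,r'} / π_{r'}) (f_r)_* η_r`. -/
noncomputable def markovOp {C : Type*} [Fintype C] (π : C → ℝ) (Q : Matrix C C ℝ)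
    (f : C → ℝ → ℝ) (η : C → Measure ℝ) : C → Measure ℝ := fun r' =>
  ∑ r, ENNReal.ofReal (π r * Q r r' / π r') • (η r).map (f r)

/-- The metric `𝒲(η,ζ) = ∑_r π_r W₁(η_r, ζ_r)`. -/
noncomputable def WDist {C : Type*} [Fintype C] (π : C → ℝ)
    (η ζ : C → Measure ℝ) : ENNReal :=
  ∑ r, ENNReal.ofReal (π r) * W1 (η r) (ζ r)

open Filter Topology
open scoped ENNReal

/-- The isometric coordinate `x ↦ 2 artanh x` from `((-1,1), d_hyp)` to `ℝ`. -/
noncomputable def hypCoord (x : ℝ) : ℝ := 2 * artanh x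

/-- The inverse `y ↦ tanh (y / 2)` of `hypCoord`. -/
noncomputable def hypInv (y : ℝ) : ℝ := Real.tanh (y / 2)

lemma dHypR_eq_dist (x y : ℝ) : dHypR x y = dist (hypCoord x) (hypCoord y) := by
  rw [dHypR, Real.dist_eq, hypCoord, hypCoord, ← mul_sub, abs_mul, abs_two]

lemma ofReal_dHypR (x y : ℝ) :
    ENNReal.ofReal (dHypR x y) = edist (hypCoord x) (hypCoord y) := by
  rw [dHypR_eq_dist, edist_dist]

lemma hypCoord_zero : hypCoord 0 = 0 := by simp [hypCoord, artanh]

lemma ofReal_dHypR_zero (x : ℝ) : ENNReal.ofReal (dHypR x 0) = ‖hypCoord x‖ₑ := by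
  rw [ofReal_dHypR, hypCoord_zero, edist_zero_right]

lemma artanh_eq_real_artanh {x : ℝ} (hx : x ∈ Set.Ioo (-1 : ℝ) 1) : artanh x = Real.artanh x :=
  (Real.artanh_eq_half_log (Set.Ioo_subset_Icc_self hx)).symm

@[fun_prop]
lemma measurable_hypCoord : Measurable hypCoord := by
  unfold hypCoord artanh
  fun_prop

@[fun_prop]
lemma continuous_hypInv : Continuous hypInv := by
  unfold hypInv
  simp_rw [Real.tanh_eq_sinh_div_cosh]
  exact (by fun_prop : Continuous _).div (by fun_prop) fun y ↦ (Real.cosh_pos _).ne'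

@[fun_prop]
lemma measurable_hypInv : Measurable hypInv := continuous_hypInv.measurable

lemma hypInv_mem (y : ℝ) : hypInv y ∈ Set.Ioo (-1 : ℝ) 1 :=
  Real.tanh_bijOn.mapsTo (Set.mem_univ _)

lemma hypCoord_hypInv (y : ℝ) : hypCoord (hypInv y) = y := by
  rw [hypCoord, artanh_eq_real_artanh (hypInv_mem y), hypInv, Real.artanh_tanh]
  ring

lemma hypInv_hypCoord {x : ℝ} (hx : x ∈ Set.Ioo (-1 : ℝ) 1) : hypInv (hypCoord x) = x := by
  rw [hypCoord, artanh_eq_real_artanh hx, hypInv, mul_div_cancel_left₀ _ two_ne_zero,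
    Real.tanh_artanh hx]

namespace MemP1

variable {ν ν₁ ν₂ : Measure ℝ}

lemma ae_mem (h : MemP1 ν) : ∀ᵐ x ∂ν, x ∈ Set.Ioo (-1 : ℝ) 1 := mem_ae_iff.2 h.2.1

lemma lintegral_hypCoord_lt_top (h : MemP1 ν) : ∫⁻ x, ‖hypCoord x‖ₑ ∂ν < ⊤ := by
  simpa only [ofReal_dHypR_zero] using h.2.2

lemma map_hypInv_hypCoord (h : MemP1 ν) : (ν.map hypCoord).map hypInv = ν := by
  rw [Measure.map_map (by fun_prop) (by fun_prop)]
  conv_rhs => rw [← Measure.map_id (μ := ν)]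
  exact Measure.map_congr (h.ae_mem.mono fun x hx ↦ hypInv_hypCoord hx)

lemma eq_of_map_hypCoord_eq (h₁ : MemP1 ν₁) (h₂ : MemP1 ν₂)
    (h : ν₁.map hypCoord = ν₂.map hypCoord) : ν₁ = ν₂ := by
  rw [← h₁.map_hypInv_hypCoord, h, h₂.map_hypInv_hypCoord]

end MemP1

namespace IsCoupling

variable {γ : Measure (ℝ × ℝ)} {ν₁ ν₂ : Measure ℝ}

lemma ae_fst (h : IsCoupling γ ν₁ ν₂) {p : ℝ → Prop} (hp : ∀ᵐ x ∂ν₁, p x) :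
    ∀ᵐ z ∂γ, p z.1 :=
  ae_of_ae_map measurable_fst.aemeasurable (h.1 ▸ hp)

lemma ae_snd (h : IsCoupling γ ν₁ ν₂) {p : ℝ → Prop} (hp : ∀ᵐ x ∂ν₂, p x) :
    ∀ᵐ z ∂γ, p z.2 :=
  ae_of_ae_map measurable_snd.aemeasurable (h.2 ▸ hp)

end IsCoupling

lemma isCoupling_prod (ν₁ ν₂ : Measure ℝ) [IsProbabilityMeasure ν₁] [IsProbabilityMeasure ν₂] :
    IsCoupling (ν₁.prod ν₂) ν₁ ν₂ := by
  constructor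
  · simp
  · simp

lemma W1_le {γ : Measure (ℝ × ℝ)} {ν₁ ν₂ : Measure ℝ} (hγ : IsProbabilityMeasure γ)
    (h : IsCoupling γ ν₁ ν₂) : W1 ν₁ ν₂ ≤ ∫⁻ p, edist (hypCoord p.1) (hypCoord p.2) ∂γ := by
  simp only [W1, ofReal_dHypR]
  exact iInf₂_le γ ⟨hγ, h⟩

lemma exists_isCoupling_lt {ν₁ ν₂ : Measure ℝ} {a : ℝ≥0∞} (h : W1 ν₁ ν₂ < a) :
    ∃ γ : Measure (ℝ × ℝ), IsProbabilityMeasure γ ∧ IsCoupling γ ν₁ ν₂ ∧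
      ∫⁻ p, edist (hypCoord p.1) (hypCoord p.2) ∂γ < a := by
  simp only [W1, ofReal_dHypR, iInf_lt_iff] at h
  obtain ⟨γ, ⟨h₁, h₂⟩, h₃⟩ := h
  exact ⟨γ, h₁, h₂, h₃⟩

lemma W1_lt_top {ν₁ ν₂ : Measure ℝ} (h₁ : MemP1 ν₁) (h₂ : MemP1 ν₂) : W1 ν₁ ν₂ < ⊤ := by
  have := h₁.1
  have := h₂.1
  have hc := isCoupling_prod ν₁ ν₂
  calc W1 ν₁ ν₂ ≤ ∫⁻ p, edist (hypCoord p.1) (hypCoord p.2) ∂(ν₁.prod ν₂) :=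
        W1_le inferInstance hc
    _ ≤ ∫⁻ p, (‖hypCoord p.1‖ₑ + ‖hypCoord p.2‖ₑ) ∂(ν₁.prod ν₂) :=
        lintegral_mono fun p ↦ by
          rw [edist_eq_enorm_sub]
          exact enorm_sub_le
    _ = ∫⁻ x, ‖hypCoord x‖ₑ ∂ν₁ + ∫⁻ x, ‖hypCoord x‖ₑ ∂ν₂ := by
        rw [lintegral_add_left (by fun_prop)]
        nth_rw 3 [← hc.1]
        nth_rw 4 [← hc.2]
        rw [lintegral_map (by fun_prop) (by fun_prop), lintegral_map (by fun_prop) (by fun_prop)]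
    _ < ⊤ := ENNReal.add_lt_top.2 ⟨h₁.lintegral_hypCoord_lt_top, h₂.lintegral_hypCoord_lt_top⟩

lemma edist_cexp_mul_I_le (a b : ℝ) :
    edist (Complex.exp (a * Complex.I)) (Complex.exp (b * Complex.I)) ≤ edist a b := by
  have h : Complex.exp (a * Complex.I) - Complex.exp (b * Complex.I) =
      Complex.exp (b * Complex.I) * (Complex.exp (Complex.I * ((a - b : ℝ) : ℂ)) - 1) := by
    rw [mul_sub, ← Complex.exp_add]
    push_cast
    ring_nf
  rw [edist_eq_enorm_sub, edist_eq_enorm_sub, h, enorm_mul,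
    show ‖Complex.exp (b * Complex.I)‖ₑ = 1 by
      rw [← ofReal_norm, Complex.norm_exp_ofReal_mul_I, ENNReal.ofReal_one], one_mul]
  exact Real.enorm_exp_I_mul_ofReal_sub_one_le

lemma integrable_cexp_mul_I {α : Type*} [MeasurableSpace α] {μ : Measure α} [IsFiniteMeasure μ]
    {u : α → ℝ} (hu : Measurable u) :
    Integrable (fun x ↦ Complex.exp (u x * Complex.I)) μ :=
  Integrable.of_bound (by fun_prop) 1 (ae_of_all _ fun x ↦ (Complex.norm_exp_ofReal_mul_I _).le)

/-- The `W₁` distance controls the difference of characteristic functions in the hyperbolic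
coordinate. -/
lemma edist_charFun_le {ν₁ ν₂ : Measure ℝ} (h : W1 ν₁ ν₂ ≠ ⊤) (t : ℝ) :
    edist (charFun (ν₁.map hypCoord) t) (charFun (ν₂.map hypCoord) t) ≤ ‖t‖ₑ * W1 ν₁ ν₂ := by
  rw [mul_comm, ← ENNReal.div_le_iff_le_mul (.inr h) (.inl enorm_ne_top)]
  refine le_iInf₂ fun γ hγ ↦ ENNReal.div_le_of_le_mul' ?_
  have := hγ.1
  simp only [ofReal_dHypR]
  rw [charFun_apply_real, charFun_apply_real, ← hγ.2.1, ← hγ.2.2,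
    Measure.map_map (by fun_prop) (by fun_prop), Measure.map_map (by fun_prop) (by fun_prop),
    integral_map (by fun_prop) (by fun_prop), integral_map (by fun_prop) (by fun_prop),
    edist_eq_enorm_sub]
  simp only [← Complex.ofReal_mul]
  rw [← integral_sub (integrable_cexp_mul_I (by fun_prop)) (integrable_cexp_mul_I (by fun_prop)),
    ← lintegral_const_mul' _ _ enorm_ne_top]
  refine (enorm_integral_le_lintegral_enorm _).trans (lintegral_mono fun p ↦ ?_)
  rw [← edist_eq_enorm_sub]
  refine (edist_cexp_mul_I_le _ _).trans (le_of_eq ?_)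
  rw [edist_eq_enorm_sub, edist_eq_enorm_sub, ← mul_sub, enorm_mul]
  rfl

lemma eq_of_W1_eq_zero {ν₁ ν₂ : Measure ℝ} (h₁ : MemP1 ν₁) (h₂ : MemP1 ν₂)
    (h : W1 ν₁ ν₂ = 0) : ν₁ = ν₂ := by
  have := h₁.1
  have := h₂.1
  refine h₁.eq_of_map_hypCoord_eq h₂ (Measure.ext_of_charFun (funext fun t ↦ ?_))
  simpa [h] using edist_charFun_le (W1_lt_top h₁ h₂).ne t

/-- A family of probability measures on `ℝ` with uniformly bounded first moment converges weakly
along any ultrafilter, to a measure satisfying the same moment bound. -/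
lemma exists_tendsto_of_lintegral_enorm_le {ι : Type*} (U : Ultrafilter ι)
    {μ : ι → ProbabilityMeasure ℝ} {B : ℝ≥0∞} (hB : B ≠ ⊤)
    (hμ : ∀ i, ∫⁻ x, ‖x‖ₑ ∂(μ i : Measure ℝ) ≤ B) :
    ∃ ν : ProbabilityMeasure ℝ, Tendsto μ U (𝓝 ν) ∧ ∫⁻ x, ‖x‖ₑ ∂(ν : Measure ℝ) ≤ B := by
  have htight : IsTightMeasureSet {x | ∃ m ∈ Set.range μ, ((m : Measure ℝ)) = x} := by
    refine isTightMeasureSet_of_tendsto_measure_norm_gt ?_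
    have hlim : Tendsto (fun r : ℝ ↦ B / ENNReal.ofReal r) atTop (𝓝 0) := by
      simpa using ENNReal.Tendsto.const_div (a := B) ENNReal.tendsto_ofReal_atTop (.inr hB)
    refine tendsto_of_tendsto_of_tendsto_of_le_of_le' tendsto_const_nhds hlim
      (Eventually.of_forall fun _ ↦ zero_le) ?_
    filter_upwards [eventually_gt_atTop 0] with r hr
    refine iSup₂_le ?_
    rintro _ ⟨_, ⟨i, rfl⟩, rfl⟩
    calc (μ i : Measure ℝ) {x | r < ‖x‖}
        ≤ (μ i : Measure ℝ) {x | ENNReal.ofReal r ≤ ‖x‖ₑ} := measure_mono fun x hx ↦ by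
          rw [Set.mem_ofPred_eq, ← ofReal_norm]
          exact ENNReal.ofReal_le_ofReal (le_of_lt hx)
      _ ≤ (∫⁻ x, ‖x‖ₑ ∂(μ i : Measure ℝ)) / ENNReal.ofReal r :=
          meas_ge_le_lintegral_div (by fun_prop) (by simpa using hr) ENNReal.ofReal_ne_top
      _ ≤ B / ENNReal.ofReal r := by gcongr; exact hμ i
  obtain ⟨ν, -, hν⟩ := (isCompact_closure_of_isTightMeasureSet htight).ultrafilter_le_nhds
    (U.map μ) (le_principal_iff.2 (Filter.mem_of_superset (by simp) subset_closure))
  have hν' : Tendsto μ U (𝓝 ν) := hν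
  refine ⟨ν, hν', ?_⟩
  have htrunc (k : ℕ) : ∫⁻ x, (min ‖x‖₊ k : NNReal) ∂(ν : Measure ℝ) ≤ B := by
    let φ : BoundedContinuousFunction ℝ NNReal :=
      .mkOfBound ⟨fun x ↦ min ‖x‖₊ k, by fun_prop⟩ k fun x y ↦ by
        rw [NNReal.dist_eq]
        refine abs_sub_le_of_nonneg_of_le (NNReal.coe_nonneg _) ?_ (NNReal.coe_nonneg _) ?_ <;>
        simp
    refine le_of_tendsto (ProbabilityMeasure.tendsto_iff_forall_lintegral_tendsto.1 hν' φ)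
      (Eventually.of_forall fun i ↦ (lintegral_mono fun x ↦ ?_).trans (hμ i))
    exact ENNReal.coe_le_coe.2 (min_le_left _ _)
  calc ∫⁻ x, ‖x‖ₑ ∂(ν : Measure ℝ)
      = ∫⁻ x, ⨆ k : ℕ, ((min ‖x‖₊ k : NNReal) : ℝ≥0∞) ∂(ν : Measure ℝ) := by
        refine lintegral_congr fun x ↦ le_antisymm ?_ (iSup_le fun k ↦ ?_)
        · obtain ⟨k, hk⟩ := exists_nat_ge ‖x‖₊
          refine le_iSup_of_le k ?_
          rw [min_eq_left hk]
          rfl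
        · exact ENNReal.coe_le_coe.2 (min_le_left _ _)
    _ = ⨆ k : ℕ, ∫⁻ x, (min ‖x‖₊ k : NNReal) ∂(ν : Measure ℝ) := by
        refine lintegral_iSup (fun k ↦ by fun_prop) fun k l hkl x ↦ ?_
        exact ENNReal.coe_le_coe.2 (min_le_min_left _ (Nat.cast_le.2 hkl))
    _ ≤ B := iSup_le htrunc

lemma tendsto_charFun {ι : Type*} {F : Filter ι} {μ : ι → ProbabilityMeasure ℝ}
    {ν : ProbabilityMeasure ℝ} (h : Tendsto μ F (𝓝 ν)) (t : ℝ) :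
    Tendsto (fun i ↦ charFun (μ i : Measure ℝ) t) F (𝓝 (charFun (ν : Measure ℝ) t)) := by
  simp_rw [charFun_eq_integral_innerProbChar]
  exact (ProbabilityMeasure.tendsto_iff_forall_integral_rclike_tendsto ℂ).1 h _

lemma edist_hypCoord_map_le {f : ℝ → ℝ} {ρ : ℝ} (hρ0 : 0 < ρ)
    (hflip : ∀ x ∈ Set.Ioo (-1 : ℝ) 1, ∀ y ∈ Set.Ioo (-1 : ℝ) 1,
      dHypR (f x) (f y) ≤ ρ * dHypR x y) {x y : ℝ}
    (hx : x ∈ Set.Ioo (-1 : ℝ) 1) (hy : y ∈ Set.Ioo (-1 : ℝ) 1) :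
    edist (hypCoord (f x)) (hypCoord (f y)) ≤
      ENNReal.ofReal ρ * edist (hypCoord x) (hypCoord y) := by
  rw [← ofReal_dHypR, ← ofReal_dHypR, ← ENNReal.ofReal_mul hρ0.le]
  exact ENNReal.ofReal_le_ofReal (hflip x hx y hy)

lemma lintegral_hypCoord_map_le {f : ℝ → ℝ} {ρ : ℝ} (hρ0 : 0 < ρ)
    (hflip : ∀ x ∈ Set.Ioo (-1 : ℝ) 1, ∀ y ∈ Set.Ioo (-1 : ℝ) 1,
      dHypR (f x) (f y) ≤ ρ * dHypR x y) {ν : Measure ℝ} (hν : MemP1 ν) :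
    ∫⁻ x, ‖hypCoord (f x)‖ₑ ∂ν ≤
      ENNReal.ofReal ρ * ∫⁻ x, ‖hypCoord x‖ₑ ∂ν + ‖hypCoord (f 0)‖ₑ := by
  have := hν.1
  calc ∫⁻ x, ‖hypCoord (f x)‖ₑ ∂ν
      ≤ ∫⁻ x, (ENNReal.ofReal ρ * ‖hypCoord x‖ₑ + ‖hypCoord (f 0)‖ₑ) ∂ν := by
        refine lintegral_mono_ae (hν.ae_mem.mono fun x hx ↦ ?_)
        have h := edist_hypCoord_map_le hρ0 hflip hx (y := 0) (by simp)
        rw [hypCoord_zero, edist_zero_right] at h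
        rw [← edist_zero_right, ← edist_zero_right (hypCoord (f 0))]
        exact (edist_triangle _ _ _).trans (by gcongr)
    _ = _ := by
        rw [lintegral_add_right _ measurable_const, lintegral_const_mul _ (by fun_prop)]
        simp

section MarkovOperator

variable {C : Type*} [Fintype C] {Q : Matrix C C ℝ} {π : C → ℝ} {f : C → ℝ → ℝ} {ρ : ℝ}

lemma sum_ofReal_weight_eq_one (hQnn : ∀ r r', 0 ≤ Q r r') (hπpos : ∀ r, 0 < π r)
    (hπstat : ∀ r', ∑ r, π r * Q r r' = π r') (r' : C) :
    ∑ r, ENNReal.ofReal (π r * Q r r' / π r') = 1 := by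
  rw [← ENNReal.ofReal_sum_of_nonneg fun r _ ↦
    div_nonneg (mul_nonneg (hπpos r).le (hQnn r r')) (hπpos r').le, ← Finset.sum_div, hπstat,
    div_self (hπpos r').ne', ENNReal.ofReal_one]

lemma sum_ofReal_mul_sum_weight_mul (hQnn : ∀ r r', 0 ≤ Q r r') (hQrow : ∀ r, ∑ r', Q r r' = 1)
    (hπpos : ∀ r, 0 < π r) (a : C → ℝ≥0∞) :
    ∑ r', ENNReal.ofReal (π r') * ∑ r, ENNReal.ofReal (π r * Q r r' / π r') * a r =
      ∑ r, ENNReal.ofReal (π r) * a r := by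
  simp_rw [Finset.mul_sum]
  rw [Finset.sum_comm]
  refine Finset.sum_congr rfl fun r _ ↦ ?_
  simp_rw [← mul_assoc, ← Finset.sum_mul]
  congr 1
  calc ∑ r', ENNReal.ofReal (π r') * ENNReal.ofReal (π r * Q r r' / π r')
      = ∑ r', ENNReal.ofReal (π r * Q r r') := by
        refine Finset.sum_congr rfl fun r' _ ↦ ?_
        rw [← ENNReal.ofReal_mul (hπpos r').le, mul_div_cancel₀ _ (hπpos r').ne']
    _ = ENNReal.ofReal (π r) := by
        rw [← ENNReal.ofReal_sum_of_nonneg fun r' _ ↦ mul_nonneg (hπpos r).le (hQnn r r'),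
          ← Finset.mul_sum, hQrow, mul_one]

lemma isProbabilityMeasure_markovOp (hQnn : ∀ r r', 0 ≤ Q r r') (hπpos : ∀ r, 0 < π r)
    (hπstat : ∀ r', ∑ r, π r * Q r r' = π r') (hfmeas : ∀ r, Measurable (f r))
    {η : C → Measure ℝ} (hη : ∀ r, IsProbabilityMeasure (η r)) (r' : C) :
    IsProbabilityMeasure (markovOp π Q f η r') := by
  constructor
  have (r : C) : (η r).map (f r) Set.univ = 1 :=
    (Measure.isProbabilityMeasure_map (hfmeas r).aemeasurable).measure_univ
  simp [markovOp, this, sum_ofReal_weight_eq_one hQnn hπpos hπstat]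

lemma lintegral_markovOp (hfmeas : ∀ r, Measurable (f r)) (η : C → Measure ℝ) (r' : C)
    {u : ℝ → ℝ≥0∞} (hu : Measurable u) :
    ∫⁻ x, u x ∂(markovOp π Q f η r') =
      ∑ r, ENNReal.ofReal (π r * Q r r' / π r') * ∫⁻ x, u (f r x) ∂(η r) := by
  simp [markovOp, lintegral_finsetSum_measure, lintegral_map hu (hfmeas _)]

lemma memP1_markovOp (hQnn : ∀ r r', 0 ≤ Q r r') (hπpos : ∀ r, 0 < π r)
    (hπstat : ∀ r', ∑ r, π r * Q r r' = π r') (hρ0 : 0 < ρ)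
    (hfmeas : ∀ r, Measurable (f r))
    (hfmap : ∀ r, ∀ x ∈ Set.Ioo (-1 : ℝ) 1, f r x ∈ Set.Ioo (-1 : ℝ) 1)
    (hflip : ∀ r, ∀ x ∈ Set.Ioo (-1 : ℝ) 1, ∀ y ∈ Set.Ioo (-1 : ℝ) 1,
      dHypR (f r x) (f r y) ≤ ρ * dHypR x y)
    {η : C → Measure ℝ} (hη : ∀ r, MemP1 (η r)) (r' : C) : MemP1 (markovOp π Q f η r') := by
  refine ⟨isProbabilityMeasure_markovOp hQnn hπpos hπstat hfmeas (fun r ↦ (hη r).1) r', ?_, ?_⟩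
  · simp only [markovOp, Measure.coe_finsetSum, Finset.sum_apply, Measure.smul_apply, smul_eq_mul]
    refine Finset.sum_eq_zero fun r _ ↦ ?_
    rw [Measure.map_apply (hfmeas r) measurableSet_Ioo.compl]
    refine mul_eq_zero_of_right _ (measure_mono_null (fun x hx ↦ ?_) (hη r).2.1)
    exact fun h ↦ hx (hfmap r x h)
  · simp_rw [ofReal_dHypR_zero]
    rw [lintegral_markovOp hfmeas η r' (by fun_prop)]
    refine ENNReal.sum_lt_top.2 fun r _ ↦ ENNReal.mul_lt_top ENNReal.ofReal_lt_top ?_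
    refine (lintegral_hypCoord_map_le hρ0 (hflip r) (hη r)).trans_lt ?_
    exact ENNReal.add_lt_top.2 ⟨ENNReal.mul_lt_top ENNReal.ofReal_lt_top
      (hη r).lintegral_hypCoord_lt_top, enorm_lt_top⟩

lemma W1_markovOp_le (hQnn : ∀ r r', 0 ≤ Q r r') (hπpos : ∀ r, 0 < π r)
    (hπstat : ∀ r', ∑ r, π r * Q r r' = π r') (hρ0 : 0 < ρ)
    (hfmeas : ∀ r, Measurable (f r))
    (hflip : ∀ r, ∀ x ∈ Set.Ioo (-1 : ℝ) 1, ∀ y ∈ Set.Ioo (-1 : ℝ) 1,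
      dHypR (f r x) (f r y) ≤ ρ * dHypR x y)
    {η ζ : C → Measure ℝ} (hη : ∀ r, MemP1 (η r)) (hζ : ∀ r, MemP1 (ζ r)) (r' : C) :
    W1 (markovOp π Q f η r') (markovOp π Q f ζ r') ≤
      ∑ r, ENNReal.ofReal (π r * Q r r' / π r') * (ENNReal.ofReal ρ * W1 (η r) (ζ r)) := by
  set w : C → ℝ≥0∞ := fun r ↦ ENNReal.ofReal (π r * Q r r' / π r') with hw
  have hw1 : ∑ r, w r = 1 := sum_ofReal_weight_eq_one hQnn hπpos hπstat r'
  have approx (ε : ℝ≥0∞) (hε : 0 < ε) : W1 (markovOp π Q f η r') (markovOp π Q f ζ r') ≤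
      ∑ r, w r * (ENNReal.ofReal ρ * W1 (η r) (ζ r)) + ENNReal.ofReal ρ * ε := by
    have hex (r : C) := exists_isCoupling_lt
      (ENNReal.lt_add_right (W1_lt_top (hη r) (hζ r)).ne hε.ne')
    choose γ hγp hγ hγlt using hex
    have hF (r : C) : Measurable (Prod.map (f r) (f r)) := (hfmeas r).prodMap (hfmeas r)
    let Γ : Measure (ℝ × ℝ) := ∑ r, w r • (γ r).map (Prod.map (f r) (f r))
    have hΓp : IsProbabilityMeasure Γ := by
      constructor
      have (r : C) : (γ r).map (Prod.map (f r) (f r)) Set.univ = 1 :=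
        (Measure.isProbabilityMeasure_map (hF r).aemeasurable).measure_univ
      simp [Γ, this, hw1]
    have hΓ : IsCoupling Γ (markovOp π Q f η r') (markovOp π Q f ζ r') := by
      constructor
      · rw [Measure.map_finset_sum' (by fun_prop)]
        refine Finset.sum_congr rfl fun r _ ↦ ?_
        rw [Measure.map_smul, Measure.map_map measurable_fst (hF r), ← (hγ r).1,
          Measure.map_map (hfmeas r) measurable_fst]
        rfl
      · rw [Measure.map_finset_sum' (by fun_prop)]
        refine Finset.sum_congr rfl fun r _ ↦ ?_
        rw [Measure.map_smul, Measure.map_map measurable_snd (hF r), ← (hγ r).2,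
          Measure.map_map (hfmeas r) measurable_snd]
        rfl
    calc W1 (markovOp π Q f η r') (markovOp π Q f ζ r')
        ≤ ∫⁻ p, edist (hypCoord p.1) (hypCoord p.2) ∂Γ := W1_le hΓp hΓ
      _ = ∑ r, w r * ∫⁻ p, edist (hypCoord (f r p.1)) (hypCoord (f r p.2)) ∂(γ r) := by
          simp only [Γ, lintegral_finsetSum_measure, lintegral_smul_measure, smul_eq_mul]
          refine Finset.sum_congr rfl fun r _ ↦ ?_
          rw [lintegral_map (by fun_prop) (hF r)]
          rfl
      _ ≤ ∑ r, w r * (ENNReal.ofReal ρ * (W1 (η r) (ζ r) + ε)) := by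
          gcongr with r
          refine le_trans ?_ (mul_le_mul_right (hγlt r).le _)
          rw [← lintegral_const_mul _ (by fun_prop)]
          refine lintegral_mono_ae ?_
          filter_upwards [(hγ r).ae_fst (hη r).ae_mem, (hγ r).ae_snd (hζ r).ae_mem] with p h₁ h₂
          exact edist_hypCoord_map_le hρ0 (hflip r) h₁ h₂
      _ = ∑ r, w r * (ENNReal.ofReal ρ * W1 (η r) (ζ r)) + ENNReal.ofReal ρ * ε := by
          simp_rw [mul_add, Finset.sum_add_distrib, ← Finset.sum_mul, hw1, one_mul]
  have hlim : Tendsto (fun ε : ℝ≥0∞ ↦ ∑ r, w r * (ENNReal.ofReal ρ * W1 (η r) (ζ r)) +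
      ENNReal.ofReal ρ * ε) (𝓝[>] 0)
      (𝓝 (∑ r, w r * (ENNReal.ofReal ρ * W1 (η r) (ζ r)) + ENNReal.ofReal ρ * 0)) := by
    refine Tendsto.mono_left ?_ nhdsWithin_le_nhds
    exact tendsto_const_nhds.add (ENNReal.Tendsto.const_mul tendsto_id (.inr ENNReal.ofReal_ne_top))
  rw [mul_zero, add_zero] at hlim
  exact ge_of_tendsto hlim (eventually_mem_nhdsWithin.mono approx)

lemma WDist_markovOp_le (hQnn : ∀ r r', 0 ≤ Q r r') (hQrow : ∀ r, ∑ r', Q r r' = 1)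
    (hπpos : ∀ r, 0 < π r) (hπstat : ∀ r', ∑ r, π r * Q r r' = π r') (hρ0 : 0 < ρ)
    (hfmeas : ∀ r, Measurable (f r))
    (hflip : ∀ r, ∀ x ∈ Set.Ioo (-1 : ℝ) 1, ∀ y ∈ Set.Ioo (-1 : ℝ) 1,
      dHypR (f r x) (f r y) ≤ ρ * dHypR x y)
    {η ζ : C → Measure ℝ} (hη : ∀ r, MemP1 (η r)) (hζ : ∀ r, MemP1 (ζ r)) :
    WDist π (markovOp π Q f η) (markovOp π Q f ζ) ≤ ENNReal.ofReal ρ * WDist π η ζ := by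
  calc WDist π (markovOp π Q f η) (markovOp π Q f ζ)
      ≤ ∑ r', ENNReal.ofReal (π r') * ∑ r, ENNReal.ofReal (π r * Q r r' / π r') *
          (ENNReal.ofReal ρ * W1 (η r) (ζ r)) := by
        unfold WDist
        gcongr with r'
        exact W1_markovOp_le hQnn hπpos hπstat hρ0 hfmeas hflip hη hζ r'
    _ = ENNReal.ofReal ρ * WDist π η ζ := by
        rw [sum_ofReal_mul_sum_weight_mul hQnn hQrow hπpos, WDist, Finset.mul_sum]
        exact Finset.sum_congr rfl fun r _ ↦ mul_left_comm _ _ _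

lemma WDist_lt_top {η ζ : C → Measure ℝ} (hη : ∀ r, MemP1 (η r)) (hζ : ∀ r, MemP1 (ζ r)) :
    WDist π η ζ < ⊤ :=
  ENNReal.sum_lt_top.2 fun r _ ↦
    ENNReal.mul_lt_top ENNReal.ofReal_lt_top (W1_lt_top (hη r) (hζ r))

lemma eq_of_WDist_eq_zero (hπpos : ∀ r, 0 < π r) {η ζ : C → Measure ℝ}
    (hη : ∀ r, MemP1 (η r)) (hζ : ∀ r, MemP1 (ζ r)) (h : WDist π η ζ = 0) : η = ζ := by
  funext r
  rw [WDist, Finset.sum_eq_zero_iff] at h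
  have := (mul_eq_zero.1 (h r (Finset.mem_univ r))).resolve_left (by simpa using hπpos r)
  exact eq_of_W1_eq_zero (hη r) (hζ r) this

lemma eq_of_WDist_le_mul (hπpos : ∀ r, 0 < π r) (hρ1 : ρ < 1) {η ζ : C → Measure ℝ}
    (hη : ∀ r, MemP1 (η r)) (hζ : ∀ r, MemP1 (ζ r))
    (h : WDist π η ζ ≤ ENNReal.ofReal ρ * WDist π η ζ) : η = ζ := by
  refine eq_of_WDist_eq_zero hπpos hη hζ (by_contra fun h0 ↦ h.not_gt ?_)
  calc ENNReal.ofReal ρ * WDist π η ζ < 1 * WDist π η ζ :=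
        ENNReal.mul_lt_mul_left h0 (WDist_lt_top hη hζ).ne (by simpa using hρ1)
    _ = WDist π η ζ := one_mul _

lemma map_markovOp {f g : C → ℝ → ℝ} {h u : ℝ → ℝ} (hf : ∀ r, Measurable (f r))
    (hg : ∀ r, Measurable (g r)) (hh : Measurable h) (hu : Measurable u) {η : C → Measure ℝ}
    (hcomm : ∀ r, ∀ᵐ x ∂(η r), h (f r x) = g r (u x)) (r' : C) :
    (markovOp π Q f η r').map h = markovOp π Q g (fun r ↦ (η r).map u) r' := by
  unfold markovOp
  rw [Measure.map_finset_sum' (by fun_prop)]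
  refine Finset.sum_congr rfl fun r _ ↦ ?_
  rw [Measure.map_smul, Measure.map_map hh (hf r), Measure.map_map (hg r) hu]
  congr 1
  exact Measure.map_congr (hcomm r)

lemma charFun_markovOp {g : C → ℝ → ℝ} (hg : ∀ r, Measurable (g r)) {μ : C → Measure ℝ}
    (hμ : ∀ r, IsProbabilityMeasure (μ r)) (r' : C) (t : ℝ) :
    charFun (markovOp π Q g μ r') t =
      ∑ r, (ENNReal.ofReal (π r * Q r r' / π r')).toReal • charFun ((μ r).map (g r)) t := by
  have (r : C) : IsProbabilityMeasure ((μ r).map (g r)) :=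
    Measure.isProbabilityMeasure_map (hg r).aemeasurable
  simp only [charFun_apply_real, ← Complex.ofReal_mul, markovOp]
  rw [integral_finsetSum_measure fun r _ ↦
    (integrable_cexp_mul_I (by fun_prop)).smul_measure ENNReal.ofReal_ne_top]
  simp_rw [integral_smul_measure]

lemma WDist_iterate_succ_le (hQnn : ∀ r r', 0 ≤ Q r r') (hQrow : ∀ r, ∑ r', Q r r' = 1)
    (hπpos : ∀ r, 0 < π r) (hπstat : ∀ r', ∑ r, π r * Q r r' = π r') (hρ0 : 0 < ρ)
    (hfmeas : ∀ r, Measurable (f r))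
    (hflip : ∀ r, ∀ x ∈ Set.Ioo (-1 : ℝ) 1, ∀ y ∈ Set.Ioo (-1 : ℝ) 1,
      dHypR (f r x) (f r y) ≤ ρ * dHypR x y) {η : C → Measure ℝ}
    (hη : ∀ n r, MemP1 ((markovOp π Q f)^[n] η r)) (n : ℕ) :
    WDist π ((markovOp π Q f)^[n] η) ((markovOp π Q f)^[n + 1] η) ≤
      ENNReal.ofReal ρ ^ n * WDist π η (markovOp π Q f η) := by
  induction n with
  | zero => simp
  | succ n ih =>
    have h := WDist_markovOp_le hQnn hQrow hπpos hπstat hρ0 hfmeas hflip (hη n) (hη (n + 1))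
    rw [← Function.iterate_succ_apply' (markovOp π Q f) n η,
      ← Function.iterate_succ_apply' (markovOp π Q f) (n + 1) η] at h
    rw [pow_succ', mul_assoc]
    exact h.trans (mul_le_mul_right ih _)

lemma sum_lintegral_iterate_le (hQnn : ∀ r r', 0 ≤ Q r r') (hQrow : ∀ r, ∑ r', Q r r' = 1)
    (hπpos : ∀ r, 0 < π r) (hρ0 : 0 < ρ) (hρ1 : ρ < 1)
    (hfmeas : ∀ r, Measurable (f r))
    (hflip : ∀ r, ∀ x ∈ Set.Ioo (-1 : ℝ) 1, ∀ y ∈ Set.Ioo (-1 : ℝ) 1,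
      dHypR (f r x) (f r y) ≤ ρ * dHypR x y)
    (hη : ∀ n r, MemP1 ((markovOp π Q f)^[n] (fun _ ↦ Measure.dirac 0) r)) (n : ℕ) :
    ∑ r, ENNReal.ofReal (π r) *
        ∫⁻ x, ‖hypCoord x‖ₑ ∂((markovOp π Q f)^[n] (fun _ ↦ Measure.dirac 0) r) ≤
      (1 - ENNReal.ofReal ρ)⁻¹ * ∑ r, ENNReal.ofReal (π r) * ‖hypCoord (f r 0)‖ₑ := by
  set K := ∑ r, ENNReal.ofReal (π r) * ‖hypCoord (f r 0)‖ₑ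
  have hρ1' : ENNReal.ofReal ρ < 1 := by simpa using hρ1
  induction n with
  | zero =>
    simp [lintegral_dirac' _ measurable_hypCoord.enorm, hypCoord_zero]
  | succ n ih =>
    set η := (markovOp π Q f)^[n] (fun _ ↦ Measure.dirac 0)
    simp_rw [Function.iterate_succ_apply', lintegral_markovOp hfmeas _ _ measurable_hypCoord.enorm]
    rw [sum_ofReal_mul_sum_weight_mul hQnn hQrow hπpos]
    calc ∑ r, ENNReal.ofReal (π r) * ∫⁻ x, ‖hypCoord (f r x)‖ₑ ∂(η r)
        ≤ ∑ r, ENNReal.ofReal (π r) *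
            (ENNReal.ofReal ρ * ∫⁻ x, ‖hypCoord x‖ₑ ∂(η r) + ‖hypCoord (f r 0)‖ₑ) := by
          gcongr with r
          exact lintegral_hypCoord_map_le hρ0 (hflip r) (hη n r)
      _ = ENNReal.ofReal ρ * ∑ r, ENNReal.ofReal (π r) * ∫⁻ x, ‖hypCoord x‖ₑ ∂(η r) + K := by
          simp_rw [mul_add, Finset.sum_add_distrib, Finset.mul_sum]
          congr 1
          exact Finset.sum_congr rfl fun r _ ↦ mul_left_comm _ _ _
      _ ≤ ENNReal.ofReal ρ * ((1 - ENNReal.ofReal ρ)⁻¹ * K) +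
            (1 - ENNReal.ofReal ρ) * ((1 - ENNReal.ofReal ρ)⁻¹ * K) := by
          rw [← mul_assoc (1 - ENNReal.ofReal ρ), ENNReal.mul_inv_cancel
            (tsub_pos_of_lt hρ1').ne' (by finiteness), one_mul]
          gcongr
      _ = (1 - ENNReal.ofReal ρ)⁻¹ * K := by
          rw [← add_mul, add_tsub_cancel_of_le hρ1'.le, one_mul]

lemma exists_markovOp_eq (hQnn : ∀ r r', 0 ≤ Q r r') (hQrow : ∀ r, ∑ r', Q r r' = 1)
    (hπpos : ∀ r, 0 < π r) (hπstat : ∀ r', ∑ r, π r * Q r r' = π r')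
    (hρ0 : 0 < ρ) (hρ1 : ρ < 1) (hfmeas : ∀ r, Measurable (f r))
    (hfmap : ∀ r, ∀ x ∈ Set.Ioo (-1 : ℝ) 1, f r x ∈ Set.Ioo (-1 : ℝ) 1)
    (hflip : ∀ r, ∀ x ∈ Set.Ioo (-1 : ℝ) 1, ∀ y ∈ Set.Ioo (-1 : ℝ) 1,
      dHypR (f r x) (f r y) ≤ ρ * dHypR x y) :
    ∃ η : C → Measure ℝ, (∀ r, MemP1 (η r)) ∧ markovOp π Q f η = η := by
  set η : ℕ → C → Measure ℝ := fun n ↦ (markovOp π Q f)^[n] (fun _ ↦ Measure.dirac 0) with hη_def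
  have hη_succ (n : ℕ) : η (n + 1) = markovOp π Q f (η n) := Function.iterate_succ_apply' _ _ _
  have hη (n : ℕ) : ∀ r, MemP1 (η n r) := by
    induction n with
    | zero =>
      refine fun r ↦ ⟨Measure.dirac.isProbabilityMeasure, ?_, ?_⟩
      · simp [hη_def, measurableSet_Ioo.compl]
      · simp_rw [ofReal_dHypR_zero]
        simp [hη_def, lintegral_dirac' _ measurable_hypCoord.enorm]
    | succ n ih =>
      rw [hη_succ]
      exact memP1_markovOp hQnn hπpos hπstat hρ0 hfmeas hfmap hflip ih
  -- weak limits, in the hyperbolic coordinate, along an ultrafilter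
  have hprob (n : ℕ) (r : C) : IsProbabilityMeasure ((η n r).map hypCoord) :=
    have := (hη n r).1
    Measure.isProbabilityMeasure_map (by fun_prop)
  set μ : ℕ → C → ProbabilityMeasure ℝ := fun n r ↦ ⟨(η n r).map hypCoord, hprob n r⟩
  have hμ (n : ℕ) (r : C) : (μ n r : Measure ℝ) = (η n r).map hypCoord := rfl
  set B := (1 - ENNReal.ofReal ρ)⁻¹ * ∑ r, ENNReal.ofReal (π r) * ‖hypCoord (f r 0)‖ₑ
  have hB : B ≠ ⊤ := by
    refine ENNReal.mul_ne_top (ENNReal.inv_ne_top.2 (tsub_pos_of_lt (by simpa using hρ1)).ne') ?_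
    exact (ENNReal.sum_lt_top.2 fun r _ ↦ ENNReal.mul_lt_top ENNReal.ofReal_lt_top
      enorm_lt_top).ne
  have hmoment (n : ℕ) (r : C) :
      ∫⁻ x, ‖x‖ₑ ∂(μ n r : Measure ℝ) ≤ B / ENNReal.ofReal (π r) := by
    rw [hμ, lintegral_map (by fun_prop) (by fun_prop)]
    refine ENNReal.le_div_iff_mul_le (.inl (by simpa using hπpos r)) (.inl ENNReal.ofReal_ne_top)
      |>.2 ?_
    rw [mul_comm]
    refine le_trans ?_
      (sum_lintegral_iterate_le hQnn hQrow hπpos hρ0 hρ1 hfmeas hflip hη n)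
    exact Finset.single_le_sum (f := fun r ↦ ENNReal.ofReal (π r) *
      ∫⁻ x, ‖hypCoord x‖ₑ ∂(η n r)) (fun _ _ ↦ zero_le) (Finset.mem_univ r)
  let U : Ultrafilter ℕ := hyperfilter ℕ
  have hU : (U : Filter ℕ) ≤ atTop := Nat.hyperfilter_le_atTop
  have hex (r : C) := exists_tendsto_of_lintegral_enorm_le U (μ := fun n ↦ μ n r)
    (ENNReal.div_ne_top hB (by simpa using hπpos r)) (fun n ↦ hmoment n r)
  choose ν hν hνB using hex
  -- the limit is fixed by the operator in the hyperbolic coordinate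
  set g : C → ℝ → ℝ := fun r y ↦ hypCoord (f r (hypInv y)) with hg_def
  have hg (r : C) : Continuous (g r) := by
    refine LipschitzWith.continuous (K := ρ.toNNReal) fun x y ↦ ?_
    refine (edist_hypCoord_map_le hρ0 (hflip r) (hypInv_mem x) (hypInv_mem y)).trans ?_
    rw [hypCoord_hypInv, hypCoord_hypInv]
    rfl
  have hgm (r : C) : Measurable (g r) := (hg r).measurable
  have hμ_succ (n : ℕ) (r : C) :
      (μ (n + 1) r : Measure ℝ) = markovOp π Q g (fun r ↦ μ n r) r := by
    rw [hμ, hη_succ]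
    refine map_markovOp hfmeas hgm (by fun_prop) (by fun_prop)
      (fun r ↦ (hη n r).ae_mem.mono fun x hx ↦ ?_) r
    simp only [hg_def, hypInv_hypCoord hx]
  have hfix (r' : C) : markovOp π Q g (fun r ↦ (ν r : Measure ℝ)) r' = ν r' := by
    have := isProbabilityMeasure_markovOp (η := fun r ↦ (ν r : Measure ℝ)) hQnn hπpos hπstat hgm
      (fun r ↦ inferInstance) r'
    refine Measure.ext_of_charFun (funext fun t ↦ ?_)
    have h₁ : Tendsto (fun n ↦ charFun (μ n r' : Measure ℝ) t) U
        (𝓝 (charFun (ν r' : Measure ℝ) t)) := tendsto_charFun (hν r') t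
    have h₂ : Tendsto (fun n ↦ charFun (μ (n + 1) r' : Measure ℝ) t) U
        (𝓝 (charFun (markovOp π Q g (fun r ↦ (ν r : Measure ℝ)) r') t)) := by
      simp_rw [hμ_succ]
      rw [charFun_markovOp hgm (fun r ↦ inferInstance)]
      simp_rw [charFun_markovOp hgm (fun r ↦ (inferInstance : IsProbabilityMeasure
        ((μ _ r : ProbabilityMeasure ℝ) : Measure ℝ)))]
      refine tendsto_finsetSum _ fun r _ ↦ Tendsto.const_smul ?_ _
      exact tendsto_charFun (ProbabilityMeasure.tendsto_map_of_tendsto_of_continuous _ _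
        (hν r) (hg r)) t
    have h₃ : Tendsto (fun n ↦ edist (charFun (μ n r' : Measure ℝ) t)
        (charFun (μ (n + 1) r' : Measure ℝ) t)) atTop (𝓝 0) := by
      have hπ0 : ENNReal.ofReal (π r') ≠ 0 := by simpa using hπpos r'
      have hlim : Tendsto (fun n : ℕ ↦ ‖t‖ₑ * (ENNReal.ofReal ρ ^ n * WDist π (η 0) (η 1) /
          ENNReal.ofReal (π r'))) atTop (𝓝 0) := by
        have h : Tendsto (fun n : ℕ ↦ ENNReal.ofReal ρ ^ n) atTop (𝓝 0) :=
          ENNReal.tendsto_pow_atTop_nhds_zero_of_lt_one (by simpa using hρ1)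
        have h' := ENNReal.Tendsto.mul_const h (.inr (WDist_lt_top (π := π) (hη 0) (hη 1)).ne)
        simpa using ENNReal.Tendsto.const_mul (ENNReal.Tendsto.div_const h' (.inr hπ0))
          (.inr (enorm_ne_top (x := t)))
      refine tendsto_of_tendsto_of_tendsto_of_le_of_le tendsto_const_nhds hlim
        (fun _ ↦ zero_le) fun n ↦ ?_
      refine (edist_charFun_le (W1_lt_top (hη n r') (hη (n + 1) r')).ne t).trans ?_
      gcongr
      refine ENNReal.le_div_iff_mul_le (.inl hπ0) (.inl ENNReal.ofReal_ne_top) |>.2 ?_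
      rw [mul_comm]
      refine le_trans ?_
        (WDist_iterate_succ_le hQnn hQrow hπpos hπstat hρ0 hfmeas hflip hη n)
      exact Finset.single_le_sum (f := fun r ↦ ENNReal.ofReal (π r) *
        W1 (η n r) (η (n + 1) r)) (fun _ _ ↦ zero_le) (Finset.mem_univ r')
    exact (edist_eq_zero.1 (tendsto_nhds_unique (h₁.edist h₂) (h₃.mono_left hU))).symm
  refine ⟨fun r ↦ (ν r : Measure ℝ).map hypInv, fun r ↦ ⟨?_, ?_, ?_⟩, funext fun r' ↦ ?_⟩
  · exact Measure.isProbabilityMeasure_map (by fun_prop)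
  · rw [Measure.map_apply (by fun_prop) measurableSet_Ioo.compl]
    exact measure_mono_null (fun y hy ↦ (hy (hypInv_mem y)).elim) measure_empty
  · simp_rw [ofReal_dHypR_zero]
    rw [lintegral_map (by fun_prop) (by fun_prop)]
    simp_rw [hypCoord_hypInv]
    exact (hνB r).trans_lt (ENNReal.div_lt_top hB (by simpa using hπpos r))
  · rw [← map_markovOp (f := g) hgm hfmeas measurable_hypInv measurable_hypInv, hfix]
    refine fun r ↦ (ae_of_all _ fun y ↦ ?_)
    exact hypInv_hypCoord (hfmap r _ (hypInv_mem y))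

end MarkovOperator

/-- For an irreducible row-stochastic matrix `Q` with stationary vector
`π`, and `ρ`-contracting (for the hyperbolic metric) maps `f_r` of `(-1,1)`, the Markov
operator `ℋ` maps `𝒫₁^C` into itself, is a `ρ`-contraction for `𝒲`, and has a unique
fixed point in `𝒫₁^C`. -/
theorem markov_operator_contraction_and_fixed_point
    {C : Type*} [Fintype C] [DecidableEq C] [Nonempty C]
    (Q : Matrix C C ℝ)
    (hQnn : ∀ r r', 0 ≤ Q r r') (hQrow : ∀ r, ∑ r', Q r r' = 1)
    (hQirr : ∀ r r', ∃ n, 0 < n ∧ 0 < (Q ^ n) r r')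
    (π : C → ℝ) (hπpos : ∀ r, 0 < π r) (hπsum : ∑ r, π r = 1)
    (hπstat : ∀ r', ∑ r, π r * Q r r' = π r')
    (ρ : ℝ) (hρ0 : 0 < ρ) (hρ1 : ρ < 1)
    (f : C → ℝ → ℝ) (hfmeas : ∀ r, Measurable (f r))
    (hfmap : ∀ r, ∀ x ∈ Set.Ioo (-1 : ℝ) 1, f r x ∈ Set.Ioo (-1 : ℝ) 1)
    (hflip : ∀ r, ∀ x ∈ Set.Ioo (-1 : ℝ) 1, ∀ y ∈ Set.Ioo (-1 : ℝ) 1,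
      dHypR (f r x) (f r y) ≤ ρ * dHypR x y) :
    (∀ η, (∀ r, MemP1 (η r)) → ∀ r', MemP1 (markovOp π Q f η r')) ∧
    (∀ η ζ, (∀ r, MemP1 (η r)) → (∀ r, MemP1 (ζ r)) →
      WDist π (markovOp π Q f η) (markovOp π Q f ζ) ≤ ENNReal.ofReal ρ * WDist π η ζ) ∧
    (∃! η : C → Measure ℝ, (∀ r, MemP1 (η r)) ∧ markovOp π Q f η = η) := by
  refine ⟨fun η hη ↦ memP1_markovOp hQnn hπpos hπstat hρ0 hfmeas hfmap hflip hη,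
    fun η ζ hη hζ ↦ WDist_markovOp_le hQnn hQrow hπpos hπstat hρ0 hfmeas hflip hη hζ, ?_⟩
  obtain ⟨η, hη, hfix⟩ :=
    exists_markovOp_eq hQnn hQrow hπpos hπstat hρ0 hρ1 hfmeas hfmap hflip
  refine ⟨η, ⟨hη, hfix⟩, fun ζ hζ ↦ eq_of_WDist_le_mul hπpos hρ1 hζ.1 hη ?_⟩
  have h := WDist_markovOp_le hQnn hQrow hπpos hπstat hρ0 hfmeas hflip hζ.1 hη
  rwa [hζ.2, hfix] at h
end
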